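/- arXiv:2108.00060 — 2 statements merged into one kernel-verified Lean document; each statement's English description precedes it below -/
import Mathlib

section
/- Let ω ∈ ℝ^ℤ be non-resonant and let H = D_ω + P with P ∈ 𝓕^{≥1} be formally linearizable (i.e. its unique Birkhoff normal form Z_H is zero). If there exists S ∈ 𝓕^{≥1} such that e^{{S,·}} H = D_ω + Z + R with R ∈ 𝓕^{≥d}, Z ∈ 𝓚 and Z supported on pairs with |α|+|β| < d+2, then Z = 0. -/
open scoped BigOperators ENNReal

/-- The index set `ℕ^ℤ_f`: finitely supported functions `ℤ → ℕ`. -/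
abbrev Idx : Type := ℤ →₀ ℕ

/-- Coefficient families of formal Hamiltonians. -/
abbrev Coeffs : Type := Idx → Idx → ℂ

/-- `|α| = ∑_j α_j`. -/
def wt (α : Idx) : ℕ := α.sum fun _ n => n

/-- The momentum `π(α,β) = ∑_j j (α_j - β_j)`. -/
def mom (α β : Idx) : ℤ := (α.sum fun j n => j * (n : ℤ)) - (β.sum fun j n => j * (n : ℤ))

/-- Membership in the space `𝓕` of formal Hamiltonians: vanishing of the
constant and linear coefficients, reality and momentum conservation. -/
def InF (H : Coeffs) : Prop :=
  H 0 0 = 0 ∧ H (Finsupp.single 0 1) 0 = 0 ∧ H 0 (Finsupp.single 0 1) = 0 ∧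
    (∀ α β, H α β = (starRingEnd ℂ) (H β α)) ∧ (∀ α β, mom α β ≠ 0 → H α β = 0)

/-- Membership in `𝓕^{≥d}`: supported on pairs with `|α|+|β| ≥ d+2`. -/
def InFge (d : ℕ) (H : Coeffs) : Prop :=
  InF H ∧ ∀ α β, wt α + wt β < d + 2 → H α β = 0

/-- Membership in `𝓚`: supported on the diagonal `{α = β}`. -/
def InK (H : Coeffs) : Prop := InF H ∧ ∀ α β, α ≠ β → H α β = 0

/-- Membership in `𝓡`: supported off the diagonal. -/
def InR (H : Coeffs) : Prop := InF H ∧ ∀ α, H α α = 0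

/-- A single term of the Poisson-bracket double sum `{F,G}_{α,β}`, indexed by
`x = (j, ((α¹,β¹), (α²,β²)))`: it is
`F_{α¹,β¹} G_{α²,β²} (α¹_j β²_j − β¹_j α²_j)` when `π(α¹,β¹) = π(α²,β²) = 0`,
`α = α¹+α²−e_j` and `β = β¹+β²−e_j`, and `0` otherwise. -/
noncomputable def bracketTerm (F G : Coeffs) (α β : Idx)
    (x : ℤ × (Idx × Idx) × (Idx × Idx)) : ℂ :=
  if mom x.2.1.1 x.2.1.2 = 0 ∧ mom x.2.2.1 x.2.2.2 = 0 ∧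
      α = x.2.1.1 + x.2.2.1 - Finsupp.single x.1 1 ∧
      β = x.2.1.2 + x.2.2.2 - Finsupp.single x.1 1 then
    F x.2.1.1 x.2.1.2 * G x.2.2.1 x.2.2.2 *
      ((x.2.1.1 x.1 : ℂ) * (x.2.2.2 x.1 : ℂ) - (x.2.1.2 x.1 : ℂ) * (x.2.2.1 x.1 : ℂ))
  else 0

/-- The Poisson bracket `{F,G}`, defined coefficientwise by
`{F,G}_{α,β} = i ∑_x bracketTerm F G α β x` (a sum with finitely many
nonzero terms, so the `finsum` gives the intended value). -/
noncomputable def bracket (F G : Coeffs) : Coeffs := fun α β =>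
  Complex.I * ∑ᶠ x : ℤ × (Idx × Idx) × (Idx × Idx), bracketTerm F G α β x

/-- Iterates `ad_G^k`. -/
noncomputable def adPow (G : Coeffs) : ℕ → Coeffs → Coeffs
  | 0, H => H
  | k + 1, H => bracket G (adPow G k H)

/-- The formal symplectic change of variables `e^{{G,·}} = ∑_{k≥0} ad_G^k / k!`;
for `G ∈ 𝓕^{≥1}` each coefficient receives only finitely many nonzero
contributions, so the `finsum` gives the intended value. -/
noncomputable def expAd (G H : Coeffs) : Coeffs := fun α β =>
  ∑ᶠ k : ℕ, ((k.factorial : ℂ))⁻¹ * adPow G k H α β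

/-- The quadratic Hamiltonian `D_ω = ∑_j ω_j |u_j|²`, whose only nonzero
coefficients are `(D_ω)_{e_j,e_j} = ω_j`. -/
noncomputable def Dom (ω : ℤ → ℝ) : Coeffs := fun α β =>
  ∑ᶠ j : ℤ, if α = Finsupp.single j 1 ∧ β = Finsupp.single j 1 then (ω j : ℂ) else 0

/-- Non-resonance: every non-trivial finite integer combination of `ω` is nonzero. -/
def NonResonant (ω : ℤ → ℝ) : Prop :=
  ∀ ℓ : ℤ →₀ ℤ, ℓ ≠ 0 → (ℓ.sum fun j c => ω j * (c : ℝ)) ≠ 0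

section Core
open MvPowerSeries

/-- Joint exponents. -/
abbrev Mon : Type := (ℤ ⊕ ℤ) →₀ ℕ

/-- Formal power series in the variables `u_j, ū_j`. -/
abbrev PS : Type := MvPowerSeries (ℤ ⊕ ℤ) ℂ

/-- momentum -/
noncomputable def mo : Mon →+ ℤ := Finsupp.weight (Sum.elim (fun j : ℤ => j) (fun j : ℤ => -j))

/-- absolute momentum -/
noncomputable def Nw : Mon →+ ℕ :=
  Finsupp.weight (Sum.elim (fun j : ℤ => j.natAbs) (fun j : ℤ => j.natAbs))

noncomputable def EE (j : ℤ) : Mon := Finsupp.single (Sum.inl j) 1 + Finsupp.single (Sum.inr j) 1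

lemma abs_mo_le (a : Mon) : |mo a| ≤ Nw a := by
  induction a using Finsupp.induction_linear with
  | zero => simp
  | add f g hf hg =>
    rw [map_add, map_add]; push_cast
    exact (abs_add_le _ _).trans (add_le_add hf hg)
  | single s n =>
    rcases s with j | j <;> simp [mo, Nw, Finsupp.weight_single, abs_mul]

lemma mo_EE (j : ℤ) : mo (EE j) = 0 := by simp [mo, EE, Finsupp.weight_single]

lemma Nw_EE (j : ℤ) : Nw (EE j) = 2 * j.natAbs := by
  simp [Nw, EE, Finsupp.weight_single]; ring

lemma degree_EE (j : ℤ) : Finsupp.degree (EE j) = 2 := by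
  simp [EE]

/-- The factor of a term of the bracket. -/
noncomputable def fac (j : ℤ) (a c : Mon) : ℂ :=
  (a (Sum.inl j) : ℂ) * (c (Sum.inr j) : ℂ) - (a (Sum.inr j) : ℂ) * (c (Sum.inl j) : ℂ)

/-- zero momentum -/
def MZ (F : PS) : Prop := ∀ a, mo a ≠ 0 → MvPowerSeries.coeff a F = 0

/-- order at least n -/
def Fil (n : ℕ) (F : PS) : Prop := ∀ a, Finsupp.degree a < n → MvPowerSeries.coeff a F = 0

/-- One mode of the bracket. -/
noncomputable def T (j : ℤ) (F v : PS) : PS :=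
  pderiv ℂ (Sum.inl j) F * pderiv ℂ (Sum.inr j) v - pderiv ℂ (Sum.inr j) F * pderiv ℂ (Sum.inl j) v

lemma coeff_X_pderiv (s : ℤ ⊕ ℤ) (F : PS) (a : Mon) :
    MvPowerSeries.coeff a (X s * pderiv ℂ s F) = (a s : ℂ) * MvPowerSeries.coeff a F := by
  rw [X, coeff_monomial_mul]
  split_ifs with h
  · rw [coeff_pderiv, tsub_add_cancel_of_le h, Finsupp.tsub_apply, Finsupp.single_eq_same]
    have : 1 ≤ a s := by simpa using h s
    push_cast [this]; ring
  · have : a s = 0 := by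
      by_contra h0
      exact h (by simpa using Nat.one_le_iff_ne_zero.mpr h0)
    simp [this]

lemma coeff_T (j : ℤ) (F v : PS) (γ : Mon) :
    MvPowerSeries.coeff γ (T j F v) = ∑ p ∈ Finset.HasAntidiagonal.antidiagonal (γ + EE j),
      MvPowerSeries.coeff p.1 F * MvPowerSeries.coeff p.2 v * fac j p.1 p.2 := by
  have h1 : MvPowerSeries.coeff (EE j + γ) (monomial (EE j) (1:ℂ) * T j F v)
      = MvPowerSeries.coeff γ (T j F v) := by
    rw [coeff_add_monomial_mul, one_mul]
  have h2 : monomial (EE j) (1:ℂ) * T j F v =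
      (X (Sum.inl j) * pderiv ℂ (Sum.inl j) F) * (X (Sum.inr j) * pderiv ℂ (Sum.inr j) v)
      - (X (Sum.inr j) * pderiv ℂ (Sum.inr j) F) * (X (Sum.inl j) * pderiv ℂ (Sum.inl j) v) := by
    have : monomial (EE j) (1:ℂ) = X (Sum.inl j) * X (Sum.inr j) := by
      rw [X, X, monomial_mul_monomial, EE, one_mul]
    rw [this, T]; ring
  rw [← h1, h2, map_sub, coeff_mul, coeff_mul, ← Finset.sum_sub_distrib, add_comm (EE j)]
  refine Finset.sum_congr rfl fun p _ => ?_
  simp only [coeff_X_pderiv, fac]; ring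

lemma term_zero {F : PS} (hF : MZ F) {j : ℤ} {γ : Mon} (hj : Nw γ < j.natAbs) {p : Mon × Mon}
    (hp : p.1 + p.2 = γ + EE j) (c : ℂ) :
    MvPowerSeries.coeff p.1 F * c * fac j p.1 p.2 = 0 := by
  have key : ∀ s t : ℤ ⊕ ℤ, EE j = Finsupp.single s 1 + Finsupp.single t 1 →
      (mo (Finsupp.single s 1)).natAbs = j.natAbs →
      p.1 s ≠ 0 → p.2 t ≠ 0 → MvPowerSeries.coeff p.1 F = 0 := by
    intro s t hE hm h1 h2
    apply hF
    intro h0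
    have l1 : Finsupp.single s 1 ≤ p.1 := by simpa using Nat.one_le_iff_ne_zero.mpr h1
    have l2 : Finsupp.single t 1 ≤ p.2 := by simpa using Nat.one_le_iff_ne_zero.mpr h2
    obtain ⟨a, ha⟩ := le_iff_exists_add.mp l1
    obtain ⟨c, hc⟩ := le_iff_exists_add.mp l2
    have hac : a + c = γ := by
      rw [ha, hc, hE] at hp
      have : (a + c) + (Finsupp.single s 1 + Finsupp.single t 1)
        = γ + (Finsupp.single s 1 + Finsupp.single t 1) := by rw [← hp]; abel
      exact add_right_cancel this
    have hN : Nw a + Nw c = Nw γ := by rw [← hac, map_add]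
    have := abs_mo_le a
    rw [Int.abs_eq_natAbs] at this
    rw [ha, map_add] at h0
    omega
  by_cases h1 : p.1 (Sum.inl j) ≠ 0 ∧ p.2 (Sum.inr j) ≠ 0
  · rw [key (Sum.inl j) (Sum.inr j) rfl (by simp [mo, Finsupp.weight_single]) h1.1 h1.2]; simp
  by_cases h2 : p.1 (Sum.inr j) ≠ 0 ∧ p.2 (Sum.inl j) ≠ 0
  · rw [key (Sum.inr j) (Sum.inl j) (add_comm _ _) (by simp [mo, Finsupp.weight_single]) h2.1 h2.2]
    simp
  have : fac j p.1 p.2 = 0 := by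
    simp only [fac]
    have e1 : (p.1 (Sum.inl j) : ℂ) * (p.2 (Sum.inr j) : ℂ) = 0 := by
      rw [mul_eq_zero]; norm_cast; tauto
    have e2 : (p.1 (Sum.inr j) : ℂ) * (p.2 (Sum.inl j) : ℂ) = 0 := by
      rw [mul_eq_zero]; norm_cast; tauto
    rw [e1, e2, sub_zero]
  rw [this, mul_zero]

lemma T_zero {F : PS} (hF : MZ F) (v : PS) {j : ℤ} {γ : Mon} (hj : Nw γ < j.natAbs) :
    MvPowerSeries.coeff γ (T j F v) = 0 := by
  rw [coeff_T]
  exact Finset.sum_eq_zero fun p hp => term_zero hF hj (Finset.HasAntidiagonal.mem_antidiagonal.mp hp) _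

lemma T_congr {F F' v v' : PS} {j : ℤ} {γ : Mon}
    (hF : ∀ a, Nw a ≤ Nw γ + 2 * j.natAbs → MvPowerSeries.coeff a F = MvPowerSeries.coeff a F')
    (hv : ∀ a, Nw a ≤ Nw γ + 2 * j.natAbs → MvPowerSeries.coeff a v = MvPowerSeries.coeff a v') :
    MvPowerSeries.coeff γ (T j F v) = MvPowerSeries.coeff γ (T j F' v') := by
  rw [coeff_T, coeff_T]
  refine Finset.sum_congr rfl fun p hp => ?_
  have := congrArg Nw (Finset.HasAntidiagonal.mem_antidiagonal.mp hp)
  rw [map_add, map_add, Nw_EE] at this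
  rw [hF _ (by omega), hv _ (by omega)]

/-- modes up to M -/
noncomputable def JJ (M : ℕ) : Finset ℤ := Finset.Icc (-(M : ℤ)) M

lemma mem_JJ {M : ℕ} {j : ℤ} : j ∈ JJ M ↔ j.natAbs ≤ M := by
  rw [JJ, Finset.mem_Icc]; omega

/-- truncated bracket -/
noncomputable def BJ (M : ℕ) (F v : PS) : PS := Complex.I • ∑ j ∈ JJ M, T j F v

/-- The bracket as an action. -/
noncomputable def act (F v : PS) : PS := fun γ => MvPowerSeries.coeff γ (BJ (Nw γ) F v)

lemma coeff_BJ (M : ℕ) (F v : PS) (γ : Mon) : MvPowerSeries.coeff γ (BJ M F v) =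
    Complex.I * ∑ j ∈ JJ M, MvPowerSeries.coeff γ (T j F v) := by
  rw [BJ, coeff_smul, map_sum]

lemma coeff_act (F v : PS) (γ : Mon) :
    MvPowerSeries.coeff γ (act F v) = MvPowerSeries.coeff γ (BJ (Nw γ) F v) := rfl

lemma coeff_act_of {F : PS} (hF : MZ F) (v : PS) {γ : Mon} {M : ℕ} (hM : Nw γ ≤ M) :
    MvPowerSeries.coeff γ (act F v) = MvPowerSeries.coeff γ (BJ M F v) := by
  rw [coeff_act, coeff_BJ, coeff_BJ]
  congr 1
  refine Finset.sum_subset (fun j hj => ?_) (fun j _ hj => ?_)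
  · rw [mem_JJ] at *; omega
  · rw [mem_JJ] at hj
    exact T_zero hF v (by omega)

lemma BJ_congr {F F' v v' : PS} {M : ℕ} {γ : Mon}
    (hF : ∀ a, Nw a ≤ Nw γ + 2 * M → MvPowerSeries.coeff a F = MvPowerSeries.coeff a F')
    (hv : ∀ a, Nw a ≤ Nw γ + 2 * M → MvPowerSeries.coeff a v = MvPowerSeries.coeff a v') :
    MvPowerSeries.coeff γ (BJ M F v) = MvPowerSeries.coeff γ (BJ M F' v') := by
  rw [coeff_BJ, coeff_BJ]
  congr 1
  refine Finset.sum_congr rfl fun j hj => ?_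
  rw [mem_JJ] at hj
  exact T_congr (fun a ha => hF a (by omega)) (fun a ha => hv a (by omega))

lemma pderiv_comm' (s t : ℤ ⊕ ℤ) (F : PS) :
    pderiv ℂ s (pderiv ℂ t F) = pderiv ℂ t (pderiv ℂ s F) := by
  ext n
  simp only [coeff_pderiv]
  rw [add_right_comm]
  by_cases h : s = t
  · subst h; ring
  · have h' : t ≠ s := fun h' => h h'.symm
    simp [h, h']; ring

lemma T_sum_right (j : ℤ) (F : PS) (s : Finset ℤ) (f : ℤ → PS) :
    T j F (∑ k ∈ s, f k) = ∑ k ∈ s, T j F (f k) := by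
  simp [T, map_sum, Finset.mul_sum, Finset.sum_sub_distrib]

lemma T_sum_left (j : ℤ) (F : PS) (s : Finset ℤ) (f : ℤ → PS) :
    T j (∑ k ∈ s, f k) F = ∑ k ∈ s, T j (f k) F := by
  simp [T, map_sum, Finset.sum_mul, Finset.sum_sub_distrib]

lemma T_smul_right (j : ℤ) (F v : PS) (c : ℂ) : T j F (c • v) = c • T j F v := by
  simp [T, smul_sub]

lemma T_smul_left (j : ℤ) (F v : PS) (c : ℂ) : T j (c • F) v = c • T j F v := by
  simp [T, smul_sub]

lemma T_add_right (j : ℤ) (F v w : PS) : T j F (v + w) = T j F v + T j F w := by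
  simp [T]; ring

lemma T_add_left (j : ℤ) (F G v : PS) : T j (F + G) v = T j F v + T j G v := by
  simp [T]; ring

lemma T_jacobi (j k : ℤ) (F G v : PS) :
    (T j F (T k G v) - T j G (T k F v) - T j (T k F G) v) +
    (T k F (T j G v) - T k G (T j F v) - T k (T j F G) v) = 0 := by
  simp only [T, map_sub, Derivation.leibniz, smul_eq_mul]
  rw [pderiv_comm' (Sum.inl k) (Sum.inl j) F, pderiv_comm' (Sum.inl k) (Sum.inr j) F,
    pderiv_comm' (Sum.inr k) (Sum.inl j) F, pderiv_comm' (Sum.inr k) (Sum.inr j) F,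
    pderiv_comm' (Sum.inl k) (Sum.inl j) G, pderiv_comm' (Sum.inl k) (Sum.inr j) G,
    pderiv_comm' (Sum.inr k) (Sum.inl j) G, pderiv_comm' (Sum.inr k) (Sum.inr j) G,
    pderiv_comm' (Sum.inl k) (Sum.inl j) v, pderiv_comm' (Sum.inl k) (Sum.inr j) v,
    pderiv_comm' (Sum.inr k) (Sum.inl j) v, pderiv_comm' (Sum.inr k) (Sum.inr j) v]
  ring

lemma sum_antisymm (s : Finset ℤ) (B : ℤ → ℤ → PS) (h : ∀ j k, B j k + B k j = 0) :
    ∑ j ∈ s, ∑ k ∈ s, B j k = 0 := by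
  have h1 : ∑ j ∈ s, ∑ k ∈ s, B j k = ∑ j ∈ s, ∑ k ∈ s, B k j := Finset.sum_comm
  have h2 : ∑ j ∈ s, ∑ k ∈ s, B j k + ∑ j ∈ s, ∑ k ∈ s, B k j = 0 := by
    simp_rw [← Finset.sum_add_distrib, h]; simp
  rw [← h1, ← two_smul ℂ] at h2
  simpa using h2

lemma BJ_BJ_right (M : ℕ) (F G v : PS) : BJ M F (BJ M G v) =
    Complex.I • Complex.I • ∑ j ∈ JJ M, ∑ k ∈ JJ M, T j F (T k G v) := by
  simp only [BJ, T_smul_right, T_sum_right, Finset.smul_sum]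

lemma BJ_BJ_left (M : ℕ) (F G v : PS) : BJ M (BJ M F G) v =
    Complex.I • Complex.I • ∑ j ∈ JJ M, ∑ k ∈ JJ M, T j (T k F G) v := by
  simp only [BJ, T_smul_left, T_sum_left, Finset.smul_sum]

lemma BJ_jacobi (M : ℕ) (F G v : PS) :
    BJ M F (BJ M G v) - BJ M G (BJ M F v) - BJ M (BJ M F G) v = 0 := by
  rw [BJ_BJ_right, BJ_BJ_right, BJ_BJ_left, ← smul_sub, ← smul_sub, ← smul_sub, ← smul_sub]
  simp only [← Finset.sum_sub_distrib]
  rw [sum_antisymm _ _ (fun j k => T_jacobi j k F G v)]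
  simp

lemma MZ_BJ {F G : PS} (hF : MZ F) (hG : MZ G) (M : ℕ) : MZ (BJ M F G) := by
  intro γ hγ
  rw [coeff_BJ, Finset.sum_eq_zero, mul_zero]
  intro j _
  rw [coeff_T]
  refine Finset.sum_eq_zero fun p hp => ?_
  have := congrArg mo (Finset.HasAntidiagonal.mem_antidiagonal.mp hp)
  rw [map_add, map_add, mo_EE] at this
  by_cases h : mo p.1 = 0
  · rw [hG p.2 (by omega)]; simp
  · rw [hF p.1 h]; simp

lemma MZ_act {F G : PS} (hF : MZ F) (hG : MZ G) : MZ (act F G) := by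
  intro γ hγ
  rw [coeff_act]
  exact MZ_BJ hF hG _ γ hγ

lemma act_jacobi {F G : PS} (hF : MZ F) (hG : MZ G) (v : PS) :
    act F (act G v) = act (act F G) v + act G (act F v) := by
  ext γ
  have hr : ∀ A B : PS, MZ A → MZ B → MvPowerSeries.coeff γ (act A (act B v)) =
      MvPowerSeries.coeff γ (BJ (3 * Nw γ) A (BJ (3 * Nw γ) B v)) := by
    intro A B hA hB
    rw [← coeff_act_of hA _ (show Nw γ ≤ 3 * Nw γ by omega), coeff_act, coeff_act]
    exact BJ_congr (fun _ _ => rfl) (fun a ha => coeff_act_of hB v (by omega))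
  have hl : MvPowerSeries.coeff γ (act (act F G) v) =
      MvPowerSeries.coeff γ (BJ (3 * Nw γ) (BJ (3 * Nw γ) F G) v) := by
    rw [← coeff_act_of (MZ_BJ hF hG _) _ (show Nw γ ≤ 3 * Nw γ by omega), coeff_act, coeff_act]
    exact BJ_congr (fun a ha => coeff_act_of hF G (by omega)) (fun _ _ => rfl)
  have := congrArg (MvPowerSeries.coeff γ) (BJ_jacobi (3 * Nw γ) F G v)
  rw [map_sub, map_sub, map_zero] at this
  rw [map_add, hr F G hF hG, hr G F hG hF, hl]
  linear_combination this

end Core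

section Exp
open MvPowerSeries

lemma act_add_left (F G v : PS) : act (F + G) v = act F v + act G v := by
  ext γ
  simp only [map_add, coeff_act, coeff_BJ, T_add_left, Finset.sum_add_distrib, mul_add]

lemma act_add_right (F v w : PS) : act F (v + w) = act F v + act F w := by
  ext γ
  simp only [map_add, coeff_act, coeff_BJ, T_add_right, Finset.sum_add_distrib, mul_add]

lemma act_smul_left (c : ℂ) (F v : PS) : act (c • F) v = c • act F v := by
  ext γ
  simp only [coeff_smul, coeff_act, coeff_BJ, T_smul_left, ← Finset.mul_sum]; ring

lemma act_smul_right (c : ℂ) (F v : PS) : act F (c • v) = c • act F v := by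
  ext γ
  simp only [coeff_smul, coeff_act, coeff_BJ, T_smul_right, ← Finset.mul_sum]; ring

/-- The bracket as a bilinear map. -/
noncomputable def actL : PS →ₗ[ℂ] PS →ₗ[ℂ] PS :=
  LinearMap.mk₂ ℂ act act_add_left act_smul_left act_add_right act_smul_right

lemma actL_apply (F v : PS) : actL F v = act F v := rfl

lemma act_fil {F v : PS} {a b : ℕ} (hF : Fil a F) (hv : Fil b v) {γ : Mon}
    (h : Finsupp.degree γ + 2 < a + b) : MvPowerSeries.coeff γ (act F v) = 0 := by
  rw [coeff_act, coeff_BJ, Finset.sum_eq_zero, mul_zero]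
  intro j _
  rw [coeff_T]
  refine Finset.sum_eq_zero fun p hp => ?_
  have := congrArg Finsupp.degree (Finset.HasAntidiagonal.mem_antidiagonal.mp hp)
  rw [map_add, map_add, degree_EE] at this
  by_cases h : Finsupp.degree p.1 < a
  · rw [hF p.1 h]; simp
  · rw [hv p.2 (by omega)]; simp

lemma Fil.mono {a b : ℕ} (h : a ≤ b) {F : PS} (hF : Fil b F) : Fil a F :=
  fun γ hγ => hF γ (by omega)

lemma Fil.add {a : ℕ} {F G : PS} (hF : Fil a F) (hG : Fil a G) : Fil a (F + G) :=
  fun γ hγ => by rw [map_add, hF γ hγ, hG γ hγ, add_zero]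

lemma Fil.smul {a : ℕ} {F : PS} (c : ℂ) (hF : Fil a F) : Fil a (c • F) :=
  fun γ hγ => by rw [coeff_smul, hF γ hγ, mul_zero]

lemma Fil.sum {a : ℕ} {s : Finset ℕ} {f : ℕ → PS} (hF : ∀ k ∈ s, Fil a (f k)) :
    Fil a (∑ k ∈ s, f k) :=
  fun γ hγ => by rw [map_sum]; exact Finset.sum_eq_zero fun k hk => hF k hk γ hγ

lemma pow_fil {F v : PS} {n : ℕ} (hF : Fil 3 F) (hv : Fil n v) (k : ℕ) :
    Fil (n + k) ((actL F ^ k) v) := by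
  induction k with
  | zero => simpa using hv
  | succ k ih =>
    intro γ hγ
    rw [pow_succ', Module.End.mul_apply, actL_apply]
    exact act_fil hF ih (by omega)

lemma MZ_pow {F v : PS} (hF : MZ F) (hv : MZ v) (k : ℕ) : MZ ((actL F ^ k) v) := by
  induction k with
  | zero => simpa using hv
  | succ k ih =>
    rw [pow_succ', Module.End.mul_apply, actL_apply]
    exact MZ_act hF ih

/-- partial sums of the exponential -/
noncomputable def ES (F : PS) (M : ℕ) (v : PS) : PS :=
  ∑ k ∈ Finset.range M, ((k.factorial : ℂ))⁻¹ • (actL F ^ k) v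

/-- the exponential -/
noncomputable def Ex (F v : PS) : PS :=
  fun γ => MvPowerSeries.coeff γ (ES F (Finsupp.degree γ + 1) v)

lemma Fil_zero (v : PS) : Fil 0 v := fun _ h => absurd h (Nat.not_lt_zero _)

lemma coeff_Ex {F v : PS} {n : ℕ} (hF : Fil 3 F) (hv : Fil n v) {γ : Mon} {M : ℕ}
    (hM : Finsupp.degree γ < n + M) :
    MvPowerSeries.coeff γ (Ex F v) = MvPowerSeries.coeff γ (ES F M v) := by
  have key : ∀ M M' : ℕ, Finsupp.degree γ < n + M → M ≤ M' →
      MvPowerSeries.coeff γ (ES F M v) = MvPowerSeries.coeff γ (ES F M' v) := by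
    intro M M' h h'
    rw [ES, ES, map_sum, map_sum]
    refine Finset.sum_subset (Finset.range_mono h') fun k _ hk => ?_
    rw [coeff_smul, pow_fil hF hv k γ (by simp at hk; omega), mul_zero]
  have : MvPowerSeries.coeff γ (Ex F v) =
    MvPowerSeries.coeff γ (ES F (Finsupp.degree γ + 1) v) := rfl
  rw [this]
  rcases le_total (Finsupp.degree γ + 1) M with h | h
  · exact key _ _ (by omega) h
  · exact (key _ _ hM h).symm

lemma Ex_trunc {F v : PS} {n : ℕ} (hF : Fil 3 F) (hv : Fil n v) (M : ℕ) :
    Fil (n + M) (Ex F v - ES F M v) := by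
  intro γ hγ
  rw [map_sub, coeff_Ex hF hv hγ, sub_self]

lemma Ex_add (F v w : PS) : Ex F (v + w) = Ex F v + Ex F w := by
  ext γ
  change MvPowerSeries.coeff γ (ES F _ _) = MvPowerSeries.coeff γ (ES F _ _) +
    MvPowerSeries.coeff γ (ES F _ _)
  simp only [ES, map_add, smul_add, Finset.sum_add_distrib]

lemma Ex_smul (F v : PS) (c : ℂ) : Ex F (c • v) = c • Ex F v := by
  ext γ
  change MvPowerSeries.coeff γ (ES F _ _) = c * MvPowerSeries.coeff γ (ES F _ _)
  rw [← coeff_smul]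
  simp only [ES, map_smul, Finset.smul_sum]
  simp only [smul_comm c]

lemma Ex_sub (F v w : PS) : Ex F (v - w) = Ex F v - Ex F w := by
  have h := Ex_add F (v - w) w
  rw [sub_add_cancel] at h
  rw [h, add_sub_cancel_right]

lemma Ex_fil {F v : PS} {n : ℕ} (hF : Fil 3 F) (hv : Fil n v) : Fil n (Ex F v) := by
  intro γ hγ
  rw [coeff_Ex hF hv (M := 0) (by omega)]; simp [ES]

lemma Ex_lead {F v : PS} {n : ℕ} (hF : Fil 3 F) (hv : Fil n v) : Fil (n + 1) (Ex F v - v) := by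
  have := Ex_trunc hF hv 1
  simpa [ES] using this

lemma MZ_Ex {F v : PS} (hF : MZ F) (hv : MZ v) : MZ (Ex F v) := by
  intro γ hγ
  change MvPowerSeries.coeff γ (ES F _ _) = 0
  rw [ES, map_sum]
  refine Finset.sum_eq_zero fun k _ => ?_
  rw [coeff_smul, MZ_pow hF hv k γ hγ, mul_zero]

lemma dbl (M : ℕ) (f : ℕ → ℕ → ℂ) (h : ∀ k l, M ≤ k + l → f k l = 0) :
    ∑ k ∈ Finset.range M, ∑ l ∈ Finset.range M, f k l =
      ∑ n ∈ Finset.range M, ∑ p ∈ Finset.HasAntidiagonal.antidiagonal n, f p.1 p.2 := by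
  rw [← Finset.sum_product', Finset.sum_sigma']
  symm
  refine Finset.sum_of_injOn (fun x => x.2) ?_ ?_ ?_ ?_
  · rintro ⟨n, k, l⟩ h1 ⟨n', k', l'⟩ h2 h3
    simp at h1 h2 h3 ⊢
    omega
  · rintro ⟨n, k, l⟩ h1
    simp at h1 ⊢
    omega
  · rintro ⟨k, l⟩ h1 h2
    apply h
    by_contra h3
    apply h2
    refine ⟨⟨k + l, k, l⟩, ?_, rfl⟩
    simp; omega
  · rintro ⟨n, k, l⟩ h1
    rfl

lemma fact_choose {n : ℕ} {p : ℕ × ℕ} (hp : p ∈ Finset.HasAntidiagonal.antidiagonal n) :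
    ((n.factorial : ℂ))⁻¹ * (n.choose p.1 : ℂ) =
      ((p.1.factorial : ℂ))⁻¹ * ((p.2.factorial : ℂ))⁻¹ := by
  have h : p.1 + p.2 = n := by simpa using hp
  subst h
  have := Nat.add_choose_mul_factorial_mul_factorial p.1 p.2
  have h' : ((p.1 + p.2).choose p.1 : ℂ) * p.1.factorial * p.2.factorial
    = (p.1 + p.2).factorial := by
    rw [← Nat.choose_symm_add] at this
    exact_mod_cast this
  have h1 : (p.1.factorial : ℂ) ≠ 0 := by exact_mod_cast Nat.factorial_ne_zero _
  have h2 : (p.2.factorial : ℂ) ≠ 0 := by exact_mod_cast Nat.factorial_ne_zero _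
  have h3 : ((p.1 + p.2).factorial : ℂ) ≠ 0 := by exact_mod_cast Nat.factorial_ne_zero _
  field_simp
  linear_combination h'

lemma pow_leibniz {F : PS} (hF : MZ F) (n : ℕ) : ∀ {H : PS}, MZ H → ∀ v : PS,
    (actL F ^ n) (act H v) = ∑ p ∈ Finset.HasAntidiagonal.antidiagonal n,
      n.choose p.1 • act ((actL F ^ p.1) H) ((actL F ^ p.2) v) := by
  induction n with
  | zero => intro H _ v; simp
  | succ n ih =>
    intro H hH v
    rw [pow_succ, Module.End.mul_apply, actL_apply, act_jacobi hF hH, map_add,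
      ih (MZ_act hF hH), ih hH,
      Finset.sum_antidiagonal_choose_succ_nsmul
        (fun i j => act ((actL F ^ i) H) ((actL F ^ j) v)) n, add_comm]
    congr 1
    refine Finset.sum_congr rfl fun p hp => ?_
    have : p.1 + p.2 = n := by simpa using hp
    rw [pow_succ (actL F) p.1, Module.End.mul_apply, actL_apply]
    congr 1
    subst this
    exact Nat.choose_symm_add

lemma Ex_act {F H : PS} (hF3 : Fil 3 F) (hF : MZ F) (hH2 : Fil 2 H) (hH : MZ H) (v : PS) :
    Ex F (act H v) = act (Ex F H) (Ex F v) := by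
  ext γ
  set M := Finsupp.degree γ + 1 with hM
  have e1 : act (Ex F H) (Ex F v) = act (ES F M H) (ES F M v)
      + (act (Ex F H - ES F M H) (Ex F v) + act (ES F M H) (Ex F v - ES F M v)) := by
    simp only [← actL_apply, map_sub, LinearMap.sub_apply]; abel
  have hES : Fil 2 (ES F M H) :=
    Fil.sum fun k _ => Fil.smul _ ((pow_fil hF3 hH2 k).mono (by omega))
  rw [e1, map_add, map_add, act_fil (Ex_trunc hF3 hH2 M) (Fil_zero _) (by omega),
    act_fil hES (Ex_trunc hF3 (Fil_zero v) M) (by omega), add_zero, add_zero]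
  have e2 : MvPowerSeries.coeff γ (act (ES F M H) (ES F M v)) =
      ∑ k ∈ Finset.range M, ∑ l ∈ Finset.range M, ((k.factorial : ℂ))⁻¹ * ((l.factorial : ℂ))⁻¹ *
        MvPowerSeries.coeff γ (act ((actL F ^ k) H) ((actL F ^ l) v)) := by
    simp only [← actL_apply, ES, map_sum, LinearMap.sum_apply, map_smul, LinearMap.smul_apply,
      smul_eq_mul, mul_assoc]
    simp only [Finset.mul_sum]
    rw [Finset.sum_comm]
    refine Finset.sum_congr rfl fun k _ => Finset.sum_congr rfl fun l _ => ?_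
    ring
  rw [e2, dbl]
  · change MvPowerSeries.coeff γ (ES F _ _) = _
    rw [ES, map_sum]
    refine Finset.sum_congr rfl fun n _ => ?_
    rw [coeff_smul, pow_leibniz hF n hH, map_sum, Finset.mul_sum]
    refine Finset.sum_congr rfl fun p hp => ?_
    rw [← fact_choose hp, map_nsmul, nsmul_eq_mul]; ring
  · intro k l hkl
    rw [act_fil (pow_fil hF3 hH2 k) (pow_fil hF3 (Fil_zero v) l) (by omega), mul_zero]

lemma Ex_inv {F : PS} (hF3 : Fil 3 F) (hF3' : Fil 3 (-F)) (v : PS) : Ex F (Ex (-F) v) = v := by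
  ext γ
  set M := Finsupp.degree γ + 1 with hM
  have e1 : Ex F (Ex (-F) v) = Ex F (ES (-F) M v) + Ex F (Ex (-F) v - ES (-F) M v) := by
    rw [← Ex_add]; congr 1; abel
  rw [e1, map_add, Ex_fil hF3 (Ex_trunc hF3' (Fil_zero v) M) γ (by omega), add_zero]
  have e2 : MvPowerSeries.coeff γ (Ex F (ES (-F) M v)) =
      ∑ k ∈ Finset.range M, ∑ l ∈ Finset.range M, ((k.factorial : ℂ))⁻¹ * ((l.factorial : ℂ))⁻¹ *
        MvPowerSeries.coeff γ ((actL F ^ k) ((actL (-F) ^ l) v)) := by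
    change MvPowerSeries.coeff γ (ES F M _) = _
    simp only [ES, map_sum, map_smul, smul_eq_mul, mul_assoc]
    simp only [Finset.mul_sum]
  rw [e2, dbl]
  · have e3 : ∀ n : ℕ, ∑ p ∈ Finset.HasAntidiagonal.antidiagonal n,
        ((p.1.factorial : ℂ))⁻¹ * ((p.2.factorial : ℂ))⁻¹ *
        MvPowerSeries.coeff γ ((actL F ^ p.1) ((actL (-F) ^ p.2) v)) =
        ((n.factorial : ℂ))⁻¹ * MvPowerSeries.coeff γ (((0 : Module.End ℂ PS) ^ n) v) := by
      intro n
      have hc : Commute (actL F) (actL (-F)) := by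
        rw [map_neg]
        exact Commute.neg_right (Commute.refl (actL F : Module.End ℂ PS))
      have := hc.add_pow' n
      rw [map_neg, add_neg_cancel, ← map_neg] at this
      rw [this, LinearMap.sum_apply, map_sum, Finset.mul_sum]
      refine Finset.sum_congr rfl fun p hp => ?_
      rw [← fact_choose hp, LinearMap.smul_apply, map_nsmul, nsmul_eq_mul, Module.End.mul_apply]
      ring
    simp_rw [e3]
    rw [hM, Finset.sum_range_succ']
    simp
  · intro k l hkl
    rw [pow_fil hF3 (pow_fil hF3' (Fil_zero v) l) k γ (by omega), mul_zero]

end Exp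

section Conv
open MvPowerSeries

/-- splitting of joint exponents -/
noncomputable def spl : Mon ≃+ Idx × Idx := Finsupp.sumFinsuppAddEquivProdFinsupp

lemma spl_fst (γ : Mon) (j : ℤ) : (spl γ).1 j = γ (Sum.inl j) := rfl
lemma spl_snd (γ : Mon) (j : ℤ) : (spl γ).2 j = γ (Sum.inr j) := rfl

lemma spl_EE (j : ℤ) : spl (EE j) = (Finsupp.single j 1, Finsupp.single j 1) := by
  refine Prod.ext (Finsupp.ext fun k => ?_) (Finsupp.ext fun k => ?_)
  · rw [spl_fst]; simp [EE, Finsupp.single_apply]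
  · rw [spl_snd]; simp [EE, Finsupp.single_apply]

/-- coefficient families as power series -/
noncomputable def toPS (H : Coeffs) : PS := fun γ => H (spl γ).1 (spl γ).2

lemma coeff_toPS (H : Coeffs) (γ : Mon) :
    MvPowerSeries.coeff γ (toPS H) = H (spl γ).1 (spl γ).2 := rfl

lemma toPS_add (F G : Coeffs) : toPS (F + G) = toPS F + toPS G := rfl

lemma wt_add (a b : Idx) : wt (a + b) = wt a + wt b :=
  Finsupp.sum_add_index' (fun _ => rfl) (fun _ _ _ => rfl)

lemma mom_add (a b c d : Idx) : mom (a + c) (b + d) = mom a b + mom c d := by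
  have : ∀ a b : Idx, ((a + b).sum fun j n => j * (n : ℤ)) =
      (a.sum fun j n => j * (n : ℤ)) + (b.sum fun j n => j * (n : ℤ)) := fun a b =>
    Finsupp.sum_add_index' (fun _ => by simp) (fun _ _ _ => by push_cast; ring)
  rw [mom, mom, mom, this, this]; ring

lemma spl_single_inl (j : ℤ) (n : ℕ) :
    spl (Finsupp.single (Sum.inl j) n) = (Finsupp.single j n, 0) := by
  refine Prod.ext (Finsupp.ext fun k => ?_) (Finsupp.ext fun k => ?_)
  · rw [spl_fst]; simp [Finsupp.single_apply]
  · rw [spl_snd]; simp [Finsupp.single_apply]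

lemma spl_single_inr (j : ℤ) (n : ℕ) :
    spl (Finsupp.single (Sum.inr j) n) = (0, Finsupp.single j n) := by
  refine Prod.ext (Finsupp.ext fun k => ?_) (Finsupp.ext fun k => ?_)
  · rw [spl_fst]; simp [Finsupp.single_apply]
  · rw [spl_snd]; simp [Finsupp.single_apply]

lemma wt_spl (γ : Mon) : wt (spl γ).1 + wt (spl γ).2 = Finsupp.degree γ := by
  induction γ using Finsupp.induction_linear with
  | zero => simp [wt]
  | add f g hf hg =>
    rw [map_add, map_add, Prod.fst_add, Prod.snd_add, wt_add, wt_add]; omega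
  | single s n =>
    rcases s with j | j
    · rw [spl_single_inl]; simp [wt]
    · rw [spl_single_inr]; simp [wt]

lemma mom_spl (γ : Mon) : mom (spl γ).1 (spl γ).2 = mo γ := by
  induction γ using Finsupp.induction_linear with
  | zero => simp [mom]
  | add f g hf hg =>
    rw [map_add, map_add, Prod.fst_add, Prod.snd_add, mom_add, hf, hg]
  | single s n =>
    rcases s with j | j
    · rw [spl_single_inl]; simp [mom, mo, Finsupp.weight_single, mul_comm]
    · rw [spl_single_inr]; simp [mom, mo, Finsupp.weight_single, mul_comm]

lemma MZ_toPS {H : Coeffs} (h : InF H) : MZ (toPS H) := fun a ha => by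
  rw [coeff_toPS]
  exact h.2.2.2.2 _ _ (by rwa [mom_spl])

lemma Fil_toPS {H : Coeffs} {d : ℕ} (h : InFge d H) : Fil (d + 2) (toPS H) := fun a ha => by
  rw [coeff_toPS]
  exact h.2 _ _ (by rwa [wt_spl])

/-- reindexing -/
noncomputable def reidx (x : (_ : ℤ) × (Mon × Mon)) : ℤ × (Idx × Idx) × (Idx × Idx) :=
  (x.1, spl x.2.1, spl x.2.2)

lemma reidx_inj : Function.Injective reidx := by
  rintro ⟨j, a, b⟩ ⟨j', a', b'⟩ h
  simp only [reidx, Prod.mk.injEq, EmbeddingLike.apply_eq_iff_eq] at h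
  obtain ⟨rfl, rfl, rfl⟩ := h
  rfl

lemma bracketTerm_ne {F G : Coeffs} {α β : Idx} {x : ℤ × (Idx × Idx) × (Idx × Idx)}
    (h : bracketTerm F G α β x ≠ 0) :
    (α = x.2.1.1 + x.2.2.1 - Finsupp.single x.1 1 ∧
      β = x.2.1.2 + x.2.2.2 - Finsupp.single x.1 1) ∧
    ((x.2.1.1 x.1 : ℂ) * (x.2.2.2 x.1 : ℂ) - (x.2.1.2 x.1 : ℂ) * (x.2.2.1 x.1 : ℂ)) ≠ 0 := by
  unfold bracketTerm at h
  split_ifs at h with hc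
  · exact ⟨⟨hc.2.2.1, hc.2.2.2⟩, right_ne_zero_of_mul h⟩
  · exact absurd rfl h

lemma toPS_bracket {F : Coeffs} (hF : MZ (toPS F)) {G : Coeffs} (hG : MZ (toPS G)) :
    toPS (bracket F G) = act (toPS F) (toPS G) := by
  ext γ
  rw [coeff_toPS, bracket, coeff_act, coeff_BJ]
  congr 1
  have hterm : ∀ j : ℤ, ∀ p : Mon × Mon, p.1 + p.2 = γ + EE j →
      bracketTerm F G (spl γ).1 (spl γ).2 (reidx ⟨j, p⟩) =
      MvPowerSeries.coeff p.1 (toPS F) * MvPowerSeries.coeff p.2 (toPS G) * fac j p.1 p.2 := by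
    intro j p hp
    have hs := congrArg spl hp
    rw [map_add, map_add, spl_EE] at hs
    have h1 := congrArg Prod.fst hs
    have h2 := congrArg Prod.snd hs
    simp only [Prod.fst_add, Prod.snd_add] at h1 h2
    rw [bracketTerm]
    simp only [reidx, mom_spl]
    by_cases m1 : mo p.1 = 0
    · by_cases m2 : mo p.2 = 0
      · rw [if_pos ⟨m1, m2, by rw [h1, add_tsub_cancel_right], by rw [h2, add_tsub_cancel_right]⟩]
        rfl
      · rw [if_neg (fun h => m2 h.2.1), hG _ m2]; simp
    · rw [if_neg (fun h => m1 h.1), hF _ m1]; simp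
  classical
  rw [finsum_eq_sum_of_support_subset (s := ((JJ (Nw γ)).sigma
    (fun j => Finset.HasAntidiagonal.antidiagonal (γ + EE j))).image reidx)]
  · rw [Finset.sum_image reidx_inj.injOn, Finset.sum_sigma]
    refine Finset.sum_congr rfl fun j _ => ?_
    rw [coeff_T]
    refine Finset.sum_congr rfl fun p hp => ?_
    exact hterm j p (Finset.HasAntidiagonal.mem_antidiagonal.mp hp)
  · rintro ⟨j, x1, x2⟩ hx
    obtain ⟨a, rfl⟩ := spl.surjective x1
    obtain ⟨b, rfl⟩ := spl.surjective x2
    have hx' : bracketTerm F G (spl γ).1 (spl γ).2 (reidx ⟨j, a, b⟩) ≠ 0 := hx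
    have hab : a + b = γ + EE j := by
      obtain ⟨⟨e1, e2⟩, hf⟩ := bracketTerm_ne (x := (j, spl a, spl b)) hx
      simp only at e1 e2 hf
      have hne : (spl a).1 j + (spl b).1 j ≠ 0 ∧ (spl a).2 j + (spl b).2 j ≠ 0 := by
        constructor
        · intro h
          obtain ⟨h1, h2⟩ := Nat.add_eq_zero_iff.mp h
          exact hf (by rw [h1, h2]; simp)
        · intro h
          obtain ⟨h1, h2⟩ := Nat.add_eq_zero_iff.mp h
          exact hf (by rw [h1, h2]; simp)
      apply spl.injective
      rw [map_add, map_add, spl_EE]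
      refine Prod.ext ?_ ?_
      · simp only [Prod.fst_add]
        rw [e1, tsub_add_cancel_of_le]
        simpa using Nat.one_le_iff_ne_zero.mpr hne.1
      · simp only [Prod.snd_add]
        rw [e2, tsub_add_cancel_of_le]
        simpa using Nat.one_le_iff_ne_zero.mpr hne.2
    rw [Finset.mem_coe, Finset.mem_image]
    refine ⟨⟨j, a, b⟩, ?_, rfl⟩
    rw [Finset.mem_sigma, mem_JJ]
    refine ⟨?_, Finset.HasAntidiagonal.mem_antidiagonal.mpr hab⟩
    by_contra hj
    rw [hterm j (a, b) hab] at hx'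
    exact hx' (term_zero hF (not_le.mp hj) hab _)

lemma toPS_adPow {S H : Coeffs} (hS : MZ (toPS S)) (hH : MZ (toPS H)) (k : ℕ) :
    toPS (adPow S k H) = (actL (toPS S) ^ k) (toPS H) := by
  induction k with
  | zero => rfl
  | succ k ih =>
    rw [adPow, toPS_bracket hS (by rw [ih]; exact MZ_pow hS hH k), ih, pow_succ',
      Module.End.mul_apply, actL_apply]

lemma toPS_expAd {S H : Coeffs} (hS : MZ (toPS S)) (hS3 : Fil 3 (toPS S)) (hH : MZ (toPS H)) :
    toPS (expAd S H) = Ex (toPS S) (toPS H) := by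
  ext γ
  rw [coeff_toPS, expAd]
  have h : ∀ k, adPow S k H (spl γ).1 (spl γ).2 =
      MvPowerSeries.coeff γ ((actL (toPS S) ^ k) (toPS H)) := fun k => by
    rw [← toPS_adPow hS hH, coeff_toPS]
  simp only [h]
  rw [finsum_eq_sum_of_support_subset (s := Finset.range (Finsupp.degree γ + 1))]
  · change _ = MvPowerSeries.coeff γ (ES _ _ _)
    rw [ES, map_sum]
    rfl
  · intro k hk
    rw [Finset.mem_coe, Finset.mem_range]
    by_contra h'
    apply hk
    change _ * _ = _
    rw [pow_fil hS3 (Fil_zero _) k γ (by omega), mul_zero]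

lemma Dom_single (ω : ℤ → ℝ) (j : ℤ) : MvPowerSeries.coeff (EE j) (toPS (Dom ω)) = ω j := by
  rw [coeff_toPS, Dom, spl_EE, finsum_eq_single _ j]
  · simp
  · intro k hk
    rw [if_neg]
    rintro ⟨h, -⟩
    exact hk (Finsupp.single_left_injective one_ne_zero h).symm

lemma Dom_ne (ω : ℤ → ℝ) (a : Mon) (h : ∀ j, a ≠ EE j) :
    MvPowerSeries.coeff a (toPS (Dom ω)) = 0 := by
  rw [coeff_toPS, Dom]
  refine finsum_eq_zero_of_forall_eq_zero fun j => ?_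
  rw [if_neg]
  rintro ⟨h1, h2⟩
  apply h j
  apply spl.injective
  rw [spl_EE]
  exact Prod.ext h1 h2

lemma MZ_Dom (ω : ℤ → ℝ) : MZ (toPS (Dom ω)) := fun a ha =>
  Dom_ne ω a fun j hj => ha (by rw [hj, mo_EE])

lemma Fil_Dom (ω : ℤ → ℝ) : Fil 2 (toPS (Dom ω)) := fun a ha =>
  Dom_ne ω a fun j hj => by rw [hj, degree_EE] at ha; omega

lemma T_Dom (ω : ℤ → ℝ) (j : ℤ) (v : PS) (γ : Mon) :
    MvPowerSeries.coeff γ (T j (toPS (Dom ω)) v) =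
      ω j * ((γ (Sum.inr j) : ℂ) - γ (Sum.inl j)) * MvPowerSeries.coeff γ v := by
  rw [coeff_T, Finset.sum_eq_single (EE j, γ)]
  · simp only [Dom_single, fac]
    have h1 : EE j (Sum.inl j) = 1 := by simp [EE]
    have h2 : EE j (Sum.inr j) = 1 := by simp [EE]
    rw [h1, h2]; push_cast; ring
  · rintro ⟨a, c⟩ hp hne
    have hp' : a + c = γ + EE j := Finset.HasAntidiagonal.mem_antidiagonal.mp hp
    by_cases h : ∃ k, a = EE k
    · obtain ⟨k, rfl⟩ := h
      have hk : k ≠ j := by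
        rintro rfl
        apply hne
        rw [add_comm] at hp'
        rw [add_right_cancel hp']
      have h1 : EE k (Sum.inl j) = 0 := by simp [EE, hk]
      have h2 : EE k (Sum.inr j) = 0 := by simp [EE, hk]
      simp [fac, h1, h2]
    · push Not at h
      simp [Dom_ne ω a h]
  · intro h
    exact absurd (Finset.HasAntidiagonal.mem_antidiagonal.mpr (add_comm _ _)) h

lemma act_Dom (ω : ℤ → ℝ) (j : ℤ) (v : PS) (γ : Mon)
    (h : ∀ k, γ (Sum.inl k) = γ (Sum.inr k) + if k = j then 1 else 0) :
    MvPowerSeries.coeff γ (act (toPS (Dom ω)) v) =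
      (-(Complex.I * ω j)) * MvPowerSeries.coeff γ v := by
  rw [coeff_act, coeff_BJ, Finset.sum_eq_single j]
  · rw [T_Dom, h j]; simp; ring
  · intro k _ hk
    rw [T_Dom, h k, if_neg hk]; simp
  · intro hj
    exfalso
    apply hj
    rw [mem_JJ]
    exact Finsupp.le_weight_of_ne_zero'
      (Sum.elim (fun j : ℤ => j.natAbs) (fun j : ℤ => j.natAbs)) (s := Sum.inl j)
      (by rw [h j]; simp)

lemma act_Dom_X (ω : ℤ → ℝ) (j : ℤ) :
    act (toPS (Dom ω)) (X (Sum.inl j)) = (-(Complex.I * ω j)) • (X (Sum.inl j) : PS) := by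
  ext γ
  rw [coeff_smul]
  by_cases hγ : γ = Finsupp.single (Sum.inl j) 1
  · apply act_Dom
    intro k
    subst hγ
    simp [Finsupp.single_apply, eq_comm]
  · rw [coeff_act, coeff_BJ, Finset.sum_eq_zero]
    · rw [coeff_X, if_neg hγ]; simp
    · intro k _
      rw [T_Dom, coeff_X, if_neg hγ, mul_zero]

lemma act_X (Z : PS) (hZ : MZ Z) (j : ℤ) (γ : Mon) :
    MvPowerSeries.coeff γ (act Z (X (Sum.inl j))) = - Complex.I *
      (MvPowerSeries.coeff (γ + Finsupp.single (Sum.inr j) 1) Z * (γ (Sum.inr j) + 1)) := by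
  rw [coeff_act_of hZ _ (show Nw γ ≤ Nw γ + j.natAbs by omega), coeff_BJ, Finset.sum_eq_single j]
  · have : T j Z (X (Sum.inl j)) = - pderiv ℂ (Sum.inr j) Z := by
      rw [T, pderiv_X_self, pderiv_X_of_ne (by simp)]; ring
    rw [this, map_neg, coeff_pderiv]; ring
  · intro k _ hk
    have : T k Z (X (Sum.inl j)) = 0 := by
      rw [T, pderiv_X_of_ne (by simp), pderiv_X_of_ne (by simpa using hk.symm)]; ring
    rw [this, map_zero]
  · intro h
    exact absurd (mem_JJ.mpr (by omega)) h

lemma Fil_X (j : ℤ) : Fil 1 (X (Sum.inl j) : PS) := by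
  intro a ha
  rw [coeff_X, if_neg]
  rintro rfl
  simp at ha

lemma Fil_neg {n : ℕ} {F : PS} (h : Fil n F) : Fil n (-F) := fun a ha => by
  rw [map_neg, h a ha, neg_zero]

/-- The core argument at the level of power series. -/
lemma core (ω : ℤ → ℝ) {H G S Z R : PS} {d : ℕ} (hH : MZ H) (hH2 : Fil 2 H)
    (hG : MZ G) (hG3 : Fil 3 G) (hS : MZ S) (hS3 : Fil 3 S) (hZ : MZ Z)
    (hR2 : Fil (d + 2) R)
    (e1 : Ex G H = toPS (Dom ω)) (e2 : Ex S H = toPS (Dom ω) + Z + R)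
    (n : ℕ) (hn : n < d + 2) (hZn : Fil n Z) (j : ℤ) (γ : Mon)
    (hdeg : Finsupp.degree γ + 1 = n)
    (h : ∀ k, γ (Sum.inl k) = γ (Sum.inr k) + if k = j then 1 else 0) :
    MvPowerSeries.coeff (γ + Finsupp.single (Sum.inr j) 1) Z = 0 := by
  set D := toPS (Dom ω) with hD
  set u : PS := X (Sum.inl j) with hu
  set c : ℂ := -(Complex.I * ω j) with hc
  have hG3' : Fil 3 (-G) := Fil_neg hG3
  set w := Ex (-G) u with hw
  have hGw : Ex G w = u := Ex_inv hG3 hG3' u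
  have heig : act H w = c • w := by
    have h1 : Ex G (act H w - c • w) = 0 := by
      rw [Ex_sub, Ex_act hG3 hG hH2 hH, Ex_smul, e1, hGw, hD, hu, act_Dom_X, sub_self]
    have h2 := Ex_inv (F := -G) hG3' (by rwa [neg_neg]) (act H w - c • w)
    rw [neg_neg, h1] at h2
    have h3 : Ex (-G) 0 = 0 := by
      have := Ex_smul (-G) 0 0
      simpa using this
    rw [h3] at h2
    exact sub_eq_zero.mp h2.symm
  set w' := Ex S w with hw'
  have heig' : act (D + Z + R) w' = c • w' := by
    rw [← e2, ← Ex_act hS3 hS hH2 hH, heig, Ex_smul]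
  have hw1 : Fil 2 (w - u) := Ex_lead hG3' (Fil_X j)
  have hw0 : Fil 1 w := Ex_fil hG3' (Fil_X j)
  have hw'1 : Fil 2 (w' - u) := by
    have := (Ex_lead hS3 hw0).add hw1
    simpa using this
  have hw'0 : Fil 1 w' := Ex_fil hS3 hw0
  have hco := congrArg (MvPowerSeries.coeff γ) heig'
  rw [act_add_left, act_add_left, map_add, map_add, act_Dom ω j _ _ h, coeff_smul,
    act_fil hR2 hw'0 (by omega)] at hco
  have hZw : act Z w' = act Z u + act Z (w' - u) := by rw [← act_add_right]; congr 1; abel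
  rw [hZw, map_add, act_fil hZn hw'1 (by omega), act_X Z hZ] at hco
  have hfin : -Complex.I * (MvPowerSeries.coeff (γ + Finsupp.single (Sum.inr j) 1) Z *
      (γ (Sum.inr j) + 1)) = 0 := by linear_combination hco
  have hI : -Complex.I ≠ 0 := neg_ne_zero.mpr Complex.I_ne_zero
  have hg : ((γ (Sum.inr j) : ℂ) + 1) ≠ 0 := Nat.cast_add_one_ne_zero _
  rcases mul_eq_zero.mp hfin with h' | h'
  · exact absurd h' hI
  · exact (mul_eq_zero.mp h').resolve_right hg

end Conv

/-- if `H = D_ω + P` is formally linearizable and some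
`S ∈ 𝓕^{≥1}` gives `e^{{S,·}} H = D_ω + Z + R` with `R ∈ 𝓕^{≥d}`, `Z ∈ 𝓚`
supported on `|α|+|β| < d+2`, then `Z = 0`. -/
theorem linearizable_no_low_normal_form (ω : ℤ → ℝ) (hω : NonResonant ω)
    (P : Coeffs) (hP : InFge 1 P)
    (hlin : ∃ G : Coeffs, InFge 1 G ∧ expAd G (Dom ω + P) = Dom ω)
    (d : ℕ) (S Z R : Coeffs) (hS : InFge 1 S) (hZK : InK Z) (hR : InFge d R)
    (hZlow : ∀ α β : Idx, d + 2 ≤ wt α + wt β → Z α β = 0)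
    (heq : expAd S (Dom ω + P) = Dom ω + Z + R) :
    Z = 0 := by
  obtain ⟨G, hG, hGe⟩ := hlin
  have mP : MZ (toPS (Dom ω + P)) := by
    intro a ha
    rw [toPS_add, map_add, MZ_Dom ω a ha, MZ_toPS hP.1 a ha, add_zero]
  have fP : Fil 2 (toPS (Dom ω + P)) := by
    rw [toPS_add]
    exact (Fil_Dom ω).add ((Fil_toPS hP).mono (by omega))
  have e1 := toPS_expAd (MZ_toPS hG.1) (Fil_toPS hG) mP
  have e2 := toPS_expAd (MZ_toPS hS.1) (Fil_toPS hS) mP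
  rw [hGe] at e1
  rw [heq, toPS_add, toPS_add] at e2
  have hfil : ∀ n, n ≤ d + 2 → Fil n (toPS Z) := by
    intro n
    induction n with
    | zero => intro _; exact Fil_zero _
    | succ n ih =>
      intro hn γ hγ
      have hZn := ih (by omega)
      rcases Nat.lt_succ_iff_lt_or_eq.mp hγ with hlt | hdeg
      · exact hZn γ hlt
      by_cases hd : (spl γ).1 = (spl γ).2
      · by_cases h0 : γ = 0
        · subst h0
          rw [coeff_toPS, map_zero]
          exact hZK.1.1
        · have hex : ∃ j, γ (Sum.inr j) ≠ 0 := by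
            by_contra hno
            push Not at hno
            apply h0
            ext s
            rcases s with j | j
            · rw [← spl_fst, hd, spl_snd, hno j]; rfl
            · rw [hno j]; rfl
          obtain ⟨j, hj⟩ := hex
          have hle : Finsupp.single (Sum.inr j) 1 ≤ γ := by
            simpa using Nat.one_le_iff_ne_zero.mpr hj
          obtain ⟨δ, hδ⟩ := le_iff_exists_add'.mp hle
          rw [hδ]
          refine core ω mP fP (MZ_toPS hG.1) (Fil_toPS hG) (MZ_toPS hS.1) (Fil_toPS hS)
            (MZ_toPS hZK.1) (Fil_toPS hR) e1.symm e2.symm n (by omega) hZn j δ ?_ ?_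
          · rw [hδ, map_add] at hdeg
            simpa using hdeg
          · intro k
            have hk : γ (Sum.inl k) = γ (Sum.inr k) := by rw [← spl_fst, hd, spl_snd]
            rw [hδ] at hk
            simpa [Finsupp.single_apply, eq_comm] using hk
      · rw [coeff_toPS]
        exact hZK.2 _ _ hd
  funext α β
  obtain ⟨γ, hγ⟩ := spl.surjective (α, β)
  by_cases hw : d + 2 ≤ wt α + wt β
  · exact hZlow α β hw
  · have h1 : α = (spl γ).1 := by rw [hγ]
    have h2 : β = (spl γ).2 := by rw [hγ]
    rw [h1, h2] at hw ⊢
    rw [wt_spl] at hw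
    exact hfil (d + 2) le_rfl γ (by omega)
end

section
/- Fix 0 < θ < 1 and set C_* := 7/(2 − 2^θ). Let α, β ∈ ℕ^ℤ_f with ∑_i i(α_i − β_i) = 0, α ≠ β, and |α| + |β| ≥ 3, and assume |∑_{i∈ℤ} (α_i − β_i) i²| ≤ 2 ∑_{i∈ℤ} |α_i − β_i|. Then for every j ∈ ℤ with α_j + β_j ≠ 0 one has ∑_{i∈ℤ} |α_i − β_i| ⟨i⟩^{θ/2} ≤ C_* ( ∑_{i∈ℤ} (α_i + β_i) ⟨i⟩^θ − 2⟨j⟩^θ ). -/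
open scoped BigOperators ENNReal

/-- `⟨j⟩ = max(|j|,1)` as a real number. -/
def zbr (j : ℤ) : ℝ := ((max j.natAbs 1 : ℕ) : ℝ)

/-- Compatibility of the total and signed multiplicities. -/
def DWCok (c : ℤ → ℕ) (d : ℤ → ℤ) : Prop := ∀ i, |d i| ≤ (c i : ℤ) ∧ (2 : ℤ) ∣ (c i : ℤ) - d i

lemma dwc_step (K : Finset ℤ) (c : ℤ → ℕ) (d : ℤ → ℤ) (hP : DWCok c d)
    (hc : 0 < ∑ i ∈ K, c i) :
    ∃ p ∈ K, ∃ σ : ℤ, (σ = 1 ∨ σ = -1) ∧ ∃ (c' : ℤ → ℕ) (d' : ℤ → ℤ), DWCok c' d' ∧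
      (∀ i, c i = c' i + if i = p then 1 else 0) ∧
      (∀ i, d i = d' i + if i = p then σ else 0) ∧
      ∀ i ∈ K, c i ≠ 0 → |i| ≤ |p| := by
  have hne : (K.filter (fun i => c i ≠ 0)).Nonempty := by
    by_contra hcon
    rw [Finset.not_nonempty_iff_eq_empty, Finset.filter_eq_empty_iff] at hcon
    have : ∑ i ∈ K, c i = 0 := Finset.sum_eq_zero (fun i hi => by simpa using hcon hi)
    omega
  obtain ⟨p, hp, hmax⟩ := Finset.exists_max_image _ (fun i : ℤ => |i|) hne
  rw [Finset.mem_filter] at hp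
  have key : ∃ σ : ℤ, (σ = 1 ∨ σ = -1) ∧ |d p - σ| ≤ (c p : ℤ) - 1 := by
    obtain ⟨h1, h2⟩ := hP p
    have h3 := hp.2
    rw [abs_le] at h1
    rcases lt_or_ge (d p) 0 with h | h
    · exact ⟨-1, Or.inr rfl, by rw [abs_le]; omega⟩
    · exact ⟨1, Or.inl rfl, by rw [abs_le]; omega⟩
  obtain ⟨σ, hσ, hk⟩ := key
  refine ⟨p, hp.1, σ, hσ, fun i => c i - if i = p then 1 else 0,
    fun i => d i - if i = p then σ else 0, ?_, ?_, ?_, ?_⟩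
  · intro i
    by_cases hi : i = p
    · subst hi
      have h2 := (hP i).2
      have h3 := hp.2
      simp only [if_true]
      constructor
      · omega
      · rcases hσ with rfl | rfl <;> omega
    · simpa [hi] using hP i
  · intro i
    by_cases hi : i = p
    · subst hi
      have := hp.2
      simp; omega
    · simp [hi]
  · intro i; simp
  · intro i hi hci
    exact hmax i (by simp [hi, hci])

lemma dwc_sum_nat (K : Finset ℤ) (c c' : ℤ → ℕ) (p : ℤ) (hp : p ∈ K)
    (h : ∀ i, c i = c' i + if i = p then 1 else 0) (f : ℤ → ℝ) :
    ∑ i ∈ K, (c i : ℝ) * f i = f p + ∑ i ∈ K, (c' i : ℝ) * f i := by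
  simp only [h]
  push_cast
  simp [add_mul, Finset.sum_add_distrib, hp, add_comm]

lemma dwc_sum_int (K : Finset ℤ) (d d' : ℤ → ℤ) (p σ : ℤ) (hp : p ∈ K)
    (h : ∀ i, d i = d' i + if i = p then σ else 0) (f : ℤ → ℤ) :
    ∑ i ∈ K, d i * f i = σ * f p + ∑ i ∈ K, d' i * f i := by
  simp only [h]
  simp [add_mul, Finset.sum_add_distrib, hp, add_comm]

lemma dwc_subadd (K : Finset ℤ) (c : ℤ → ℕ) (x : ℤ → ℝ) (hx : ∀ i, 0 ≤ x i) (s : ℝ)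
    (h0 : 0 < s) (h1 : s ≤ 1) :
    (∑ i ∈ K, (c i : ℝ) * x i) ^ s ≤ ∑ i ∈ K, (c i : ℝ) * x i ^ s := by
  induction K using Finset.induction_on with
  | empty => simp [Real.zero_rpow h0.ne']
  | insert a K ha ih =>
    rw [Finset.sum_insert ha, Finset.sum_insert ha]
    have hn : 0 ≤ ∑ i ∈ K, (c i : ℝ) * x i :=
      Finset.sum_nonneg fun i _ => mul_nonneg (Nat.cast_nonneg _) (hx i)
    have hc : ((c a : ℝ)) ^ s ≤ c a := by
      rcases Nat.eq_zero_or_pos (c a) with h | h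
      · simp [h, Real.zero_rpow h0.ne']
      · have : (1 : ℝ) ≤ c a := by exact_mod_cast h
        calc (c a : ℝ) ^ s ≤ (c a : ℝ) ^ (1 : ℝ) := Real.rpow_le_rpow_of_exponent_le this h1
          _ = c a := Real.rpow_one _
    calc _ ≤ ((c a : ℝ) * x a) ^ s + (∑ i ∈ K, (c i : ℝ) * x i) ^ s :=
          Real.rpow_add_le_add_rpow (mul_nonneg (Nat.cast_nonneg _) (hx a)) hn h0.le h1
      _ ≤ _ := by
          rw [Real.mul_rpow (Nat.cast_nonneg _) (hx a)]
          have := mul_le_mul_of_nonneg_right hc (Real.rpow_nonneg (hx a) s)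
          linarith

lemma dwc_conc (θ x y : ℝ) (h0 : 0 < θ) (h1 : θ < 1) (hx : 0 < x) (hxy : x ≤ y) :
    (y + x) ^ θ ≤ y ^ θ + (2 ^ θ - 1) * x ^ θ := by
  have hy : 0 < y := by linarith
  have hc := (Real.concaveOn_rpow h0.le h1.le).2
  have hl : 0 ≤ x / y := by positivity
  have hl1 : x / y ≤ 1 := (div_le_one hy).2 hxy
  have e1 := hc (x := x) (y := x + y) hx.le (by simp; positivity) hl (sub_nonneg.2 hl1) (by ring)
  have e2 := hc (x := x) (y := x + y) hx.le (by simp; positivity) (sub_nonneg.2 hl1) hl (by ring)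
  have a1 : (x / y) • x + (1 - x / y) • (x + y) = y := by
    simp only [smul_eq_mul]; field_simp; ring
  have a2 : (1 - x / y) • x + (x / y) • (x + y) = 2 * x := by
    simp only [smul_eq_mul]; field_simp; ring
  rw [a1] at e1
  rw [a2] at e2
  simp only [smul_eq_mul] at e1 e2
  rw [Real.mul_rpow (by norm_num) hx.le] at e2
  rw [add_comm y x]
  nlinarith

lemma dwc_conc_nat (θ x y : ℝ) (h0 : 0 < θ) (h1 : θ < 1) (hx : 0 < x) (hxy : x ≤ y) (n : ℕ) :
    (y + n * x) ^ θ ≤ y ^ θ + (2 ^ θ - 1) * (n * x ^ θ) := by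
  induction n with
  | zero => simp
  | succ n ih =>
    have : x ≤ y + n * x := by nlinarith [mul_nonneg (Nat.cast_nonneg (α := ℝ) n) hx.le]
    have := dwc_conc θ x (y + n * x) h0 h1 hx this
    push_cast
    rw [show y + ((n : ℝ) + 1) * x = y + n * x + x by ring]
    linarith

lemma dwc_conc_sum (θ y : ℝ) (h0 : 0 < θ) (h1 : θ < 1) (K : Finset ℤ) (c : ℤ → ℕ) (x : ℤ → ℝ)
    (hx : ∀ i, 0 < x i) (hxy : ∀ i ∈ K, c i ≠ 0 → x i ≤ y) :
    (y + ∑ i ∈ K, (c i : ℝ) * x i) ^ θ ≤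
      y ^ θ + (2 ^ θ - 1) * ∑ i ∈ K, (c i : ℝ) * x i ^ θ := by
  induction K using Finset.induction_on with
  | empty => simp
  | insert a K ha ih =>
    rw [Finset.sum_insert ha, Finset.sum_insert ha]
    have ih' := ih (fun i hi => hxy i (Finset.mem_insert_of_mem hi))
    have hn : 0 ≤ ∑ i ∈ K, (c i : ℝ) * x i :=
      Finset.sum_nonneg fun i _ => mul_nonneg (Nat.cast_nonneg _) (hx i).le
    by_cases hca : c a = 0
    · simpa [hca] using ih'
    · have := dwc_conc_nat θ (x a) (y + ∑ i ∈ K, (c i : ℝ) * x i) h0 h1 (hx a)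
        (by have := hxy a (Finset.mem_insert_self _ _) hca; linarith) (c a)
      rw [show y + ((c a : ℝ) * x a + ∑ i ∈ K, (c i : ℝ) * x i) =
        y + ∑ i ∈ K, (c i : ℝ) * x i + c a * x a by ring]
      linarith

lemma dwc_abs_sum (K : Finset ℤ) (c : ℤ → ℕ) (d : ℤ → ℤ) (hP : DWCok c d) (f : ℤ → ℤ) :
    |∑ i ∈ K, d i * f i| ≤ ∑ i ∈ K, (c i : ℤ) * |f i| := by
  refine (Finset.abs_sum_le_sum_abs _ _).trans (Finset.sum_le_sum fun i _ => ?_)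
  rw [abs_mul]
  exact mul_le_mul_of_nonneg_right (hP i).1 (abs_nonneg _)

/-- The arithmetic bound for the largest index. -/
lemma dwc_arith (p q σ τ M L Q T s1 s2 : ℤ) (hσ : σ = 1 ∨ σ = -1) (hτ : τ = 1 ∨ τ = -1)
    (hM : 1 ≤ M) (hMT : M ≤ T) (hLT : L ≤ T) (hQT : Q ≤ T)
    (h1 : σ * p + (τ * q + s1) = 0) (hs1 : |s1| ≤ L)
    (h2 : |σ * p ^ 2 + (τ * q ^ 2 + s2)| ≤ 2 * (2 + M)) (hs2 : |s2| ≤ Q)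
    (hnc : ¬ (p = q ∧ σ = -τ)) : |p| ≤ 7 * T := by
  rw [abs_le] at *
  have hpp : p ≤ p ^ 2 ∧ -p ≤ p ^ 2 := by
    constructor
    · exact Int.le_self_sq p
    · simpa using Int.le_self_sq (-p)
  have opp : ∀ u v : ℤ, |u ^ 2 - v ^ 2| ≤ 7 * T → |u - v| ≤ T → u ≠ v → |u| ≤ 7 * T := by
    intro u v ha hb hne
    by_cases h0 : u + v = 0
    · rw [abs_le] at *; constructor <;> linarith
    · have hm : |u + v| ≤ |u ^ 2 - v ^ 2| := by
        rw [show u ^ 2 - v ^ 2 = (u + v) * (u - v) by ring, abs_mul]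
        have : 1 ≤ |u - v| := Int.one_le_abs (sub_ne_zero.2 hne)
        nlinarith [abs_nonneg (u + v)]
      have hm' := hm.trans ha
      rw [abs_le] at hm' hb ⊢
      constructor <;> linarith
  have hq := sq_nonneg q
  rcases hσ with rfl | rfl <;> rcases hτ with rfl | rfl
  · constructor <;> linarith
  · have := opp p q (by rw [abs_le]; constructor <;> linarith)
      (by rw [abs_le]; constructor <;> linarith) (fun h => hnc ⟨h, by norm_num⟩)
    exact abs_le.1 this
  · have := opp p q (by rw [abs_le]; constructor <;> linarith)
      (by rw [abs_le]; constructor <;> linarith) (fun h => hnc ⟨h, by norm_num⟩)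
    exact abs_le.1 this
  · constructor <;> linarith

lemma dwc_zbr_one (i : ℤ) : 1 ≤ zbr i := by
  unfold zbr; exact_mod_cast le_max_right _ _

lemma dwc_zbr_abs (i : ℤ) : (|i| : ℝ) ≤ zbr i := by
  unfold zbr
  have : ((i.natAbs : ℕ) : ℝ) = |(i : ℝ)| := by rw [Nat.cast_natAbs]; push_cast; rfl
  rw [← this]
  exact_mod_cast le_max_left _ _

lemma dwc_zbr_le (i : ℤ) (y : ℝ) (h1 : 1 ≤ y) (h : (|i| : ℝ) ≤ y) : zbr i ≤ y := by
  unfold zbr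
  have : ((i.natAbs : ℕ) : ℝ) = |(i : ℝ)| := by rw [Nat.cast_natAbs]; push_cast; rfl
  rw [Nat.cast_max, this]
  simp [h1, h]

lemma dwc_zbr_mono (i k : ℤ) (h : |i| ≤ |k|) : zbr i ≤ zbr k :=
  dwc_zbr_le i _ (dwc_zbr_one k) (le_trans (by exact_mod_cast h) (dwc_zbr_abs k))

lemma dwc_core (θ : ℝ) (hθ0 : 0 < θ) (hθ1 : θ < 1) (K : Finset ℤ) (c : ℤ → ℕ) (d : ℤ → ℤ)
    (hP : DWCok c d) (hmom : ∑ i ∈ K, d i * i = 0) (hN : 3 ≤ ∑ i ∈ K, c i)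
    (h : |∑ i ∈ K, d i * i ^ 2| ≤ 2 * ∑ i ∈ K, |d i|) (j : ℤ) (hjK : j ∈ K) (hj : c j ≠ 0) :
    (∑ i ∈ K, |(d i : ℝ)| * zbr i ^ (θ / 2)) ≤
      (7 / (2 - (2 : ℝ) ^ θ)) * ((∑ i ∈ K, (c i : ℝ) * zbr i ^ θ) - 2 * zbr j ^ θ) := by
  obtain ⟨p, hp, σ, hσ, c1, d1, hP1, hc1, hd1, hm1⟩ := dwc_step K c d hP (by omega)
  have cnt1 : ∑ i ∈ K, c i = ∑ i ∈ K, c1 i + 1 := by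
    simp only [hc1]; simp [Finset.sum_add_distrib, hp]
  obtain ⟨q, hq, τ, hτ, c2, d2, hP2, hc2, hd2, hm2⟩ := dwc_step K c1 d1 hP1 (by omega)
  have cnt2 : ∑ i ∈ K, c1 i = ∑ i ∈ K, c2 i + 1 := by
    simp only [hc2]; simp [Finset.sum_add_distrib, hq]
  have hM : 1 ≤ ∑ i ∈ K, c2 i := by omega
  have hz0 : ∀ i, 0 < zbr i := fun i => lt_of_lt_of_le one_pos (dwc_zbr_one i)
  set S := ∑ i ∈ K, (c2 i : ℝ) * zbr i ^ θ with hS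
  have hqp : |q| ≤ |p| := by
    apply hm1 q hq
    have e1 := hc1 q
    have e2 := hc2 q
    simp at e2
    omega
  have hzqp := dwc_zbr_mono q p hqp
  have hzjp := dwc_zbr_mono j p (hm1 j hjK hj)
  have hMR : (1 : ℝ) ≤ ∑ i ∈ K, (c2 i : ℝ) := by exact_mod_cast hM
  have hS1 : 1 ≤ S := by
    refine hMR.trans (Finset.sum_le_sum fun i _ => ?_)
    have := Real.one_le_rpow (dwc_zbr_one i) hθ0.le
    nlinarith [Nat.cast_nonneg (α := ℝ) (c2 i)]
  -- signed sums
  have mom2 : σ * p + (τ * q + ∑ i ∈ K, d2 i * i) = 0 := by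
    rw [← hmom, dwc_sum_int K d d1 p σ hp hd1 (fun i => i),
      dwc_sum_int K d1 d2 q τ hq hd2 (fun i => i)]
  have sq2 : ∑ i ∈ K, d i * i ^ 2 = σ * p ^ 2 + (τ * q ^ 2 + ∑ i ∈ K, d2 i * i ^ 2) := by
    rw [dwc_sum_int K d d1 p σ hp hd1 (fun i => i ^ 2),
      dwc_sum_int K d1 d2 q τ hq hd2 (fun i => i ^ 2)]
  have hs1 := dwc_abs_sum K c2 d2 hP2 (fun i => i)
  have hs2 := dwc_abs_sum K c2 d2 hP2 (fun i => i ^ 2)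
  -- reduction by concavity
  have hconc : zbr p ^ θ ≤ zbr q ^ θ + (2 ^ θ - 1) * S := by
    have hpb : zbr p ≤ zbr q + ∑ i ∈ K, (c2 i : ℝ) * zbr i := by
      have hn : 0 ≤ ∑ i ∈ K, (c2 i : ℝ) * zbr i :=
        Finset.sum_nonneg fun i _ => mul_nonneg (Nat.cast_nonneg _) (hz0 i).le
      apply dwc_zbr_le
      · linarith [dwc_zbr_one q]
      · have hint : |p| ≤ |q| + ∑ i ∈ K, (c2 i : ℤ) * |i| := by
          have a := le_abs_self q
          have b := neg_abs_le q
          rw [abs_le] at hs1 ⊢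
          rcases hσ with rfl | rfl <;> rcases hτ with rfl | rfl <;> constructor <;> linarith
        have hr : (|p| : ℝ) ≤ |(q : ℝ)| + ∑ i ∈ K, (c2 i : ℝ) * |(i : ℝ)| := by
          exact_mod_cast hint
        refine hr.trans (add_le_add (dwc_zbr_abs q) (Finset.sum_le_sum fun i _ => ?_))
        exact mul_le_mul_of_nonneg_left (dwc_zbr_abs i) (Nat.cast_nonneg _)
    refine (Real.rpow_le_rpow (hz0 p).le hpb hθ0.le).trans ?_
    apply dwc_conc_sum θ _ hθ0 hθ1 K c2 zbr hz0
    intro i hi hci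
    apply dwc_zbr_mono
    apply hm2 i hi
    have := hc2 i
    omega
  have hR : (2 - (2 : ℝ) ^ θ) * S ≤ (∑ i ∈ K, (c i : ℝ) * zbr i ^ θ) - 2 * zbr j ^ θ := by
    rw [dwc_sum_nat K c c1 p hp hc1, dwc_sum_nat K c1 c2 q hq hc2]
    have := Real.rpow_le_rpow (hz0 j).le hzjp hθ0.le
    linarith
  have h2θ : (2 : ℝ) ^ θ < 2 := by
    calc (2 : ℝ) ^ θ < 2 ^ (1 : ℝ) := Real.rpow_lt_rpow_of_exponent_lt (by norm_num) hθ1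
      _ = 2 := Real.rpow_one 2
  have hpos : 0 < 2 - (2 : ℝ) ^ θ := by linarith
  suffices hmain : (∑ i ∈ K, |(d i : ℝ)| * zbr i ^ (θ / 2)) ≤ 7 * S by
    refine hmain.trans ?_
    rw [div_mul_eq_mul_div, le_div_iff₀ hpos]
    nlinarith
  have htail : ∑ i ∈ K, (c2 i : ℝ) * zbr i ^ (θ / 2) ≤ S := by
    refine Finset.sum_le_sum fun i _ => mul_le_mul_of_nonneg_left ?_ (Nat.cast_nonneg _)
    exact Real.rpow_le_rpow_of_exponent_le (dwc_zbr_one i) (by linarith)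
  have hw : ∀ i, 0 ≤ zbr i ^ (θ / 2) := fun i => Real.rpow_nonneg (hz0 i).le _
  by_cases hcan : p = q ∧ σ = -τ
  · have hdd : ∀ i, d i = d2 i := by
      intro i
      rw [hd1, hd2, hcan.1, hcan.2]
      split_ifs <;> ring
    have : (∑ i ∈ K, |(d i : ℝ)| * zbr i ^ (θ / 2)) ≤ ∑ i ∈ K, (c2 i : ℝ) * zbr i ^ (θ / 2) := by
      refine Finset.sum_le_sum fun i _ => mul_le_mul_of_nonneg_right ?_ (hw i)
      rw [hdd]
      exact_mod_cast (hP2 i).1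
    linarith
  · have hD : ∑ i ∈ K, |d i| ≤ 2 + ∑ i ∈ K, (c2 i : ℤ) := by
      have : ∑ i ∈ K, |d i| ≤ ∑ i ∈ K, (c i : ℤ) := Finset.sum_le_sum fun i _ => (hP i).1
      have e : ∑ i ∈ K, (c i : ℤ) = 2 + ∑ i ∈ K, (c2 i : ℤ) := by
        rw [← Nat.cast_sum, ← Nat.cast_sum]; omega
      omega
    have hi1 : ∀ i : ℤ, i ^ 2 ≤ (max |i| 1) ^ 2 := fun i => by
      rw [← sq_abs]
      exact pow_le_pow_left₀ (abs_nonneg _) (le_max_left _ _) 2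
    have hi2 : ∀ i : ℤ, 1 ≤ (max |i| 1) ^ 2 := fun i => one_le_pow₀ (le_max_right _ _)
    have hpT : |p| ≤ 7 * ∑ i ∈ K, (c2 i : ℤ) * (max |i| 1) ^ 2 := by
      refine dwc_arith p q σ τ (∑ i ∈ K, (c2 i : ℤ)) _ _ _ _ _ hσ hτ (by exact_mod_cast hM)
        ?_ ?_ ?_ mom2 hs1 (by rw [← sq2]; linarith) hs2 hcan
      · refine Finset.sum_le_sum fun i _ => ?_
        exact le_mul_of_one_le_right (Nat.cast_nonneg _) (hi2 i)
      · refine Finset.sum_le_sum fun i _ => mul_le_mul_of_nonneg_left ?_ (Nat.cast_nonneg _)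
        refine le_trans ?_ (hi1 i)
        rw [← sq_abs]
        exact Int.le_self_sq _
      · refine Finset.sum_le_sum fun i _ => mul_le_mul_of_nonneg_left ?_ (Nat.cast_nonneg _)
        rw [abs_of_nonneg (sq_nonneg i)]
        exact hi1 i
    have hzi : ∀ i : ℤ, zbr i = ((max |i| 1 : ℤ) : ℝ) := by
      intro i
      unfold zbr
      rw [← Int.cast_natCast]
      congr 1
      push_cast
      simp
    set T := ∑ i ∈ K, (c2 i : ℝ) * zbr i ^ 2 with hT
    have hT1 : 1 ≤ T := by
      refine hMR.trans (Finset.sum_le_sum fun i _ => ?_)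
      exact le_mul_of_one_le_right (Nat.cast_nonneg _) (one_le_pow₀ (dwc_zbr_one i))
    have hpT' : (|p| : ℝ) ≤ 7 * T := by
      have e : T = ((∑ i ∈ K, (c2 i : ℤ) * (max |i| 1) ^ 2 : ℤ) : ℝ) := by
        rw [hT, Int.cast_sum]
        refine Finset.sum_congr rfl fun i _ => ?_
        rw [hzi]; simp only [Int.cast_mul, Int.cast_pow, Int.cast_natCast]
      rw [e]
      exact_mod_cast hpT
    have hzp : zbr p ≤ 7 * T := dwc_zbr_le p _ (by linarith) hpT'
    have hTS : T ^ (θ / 2) ≤ S := by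
      refine (dwc_subadd K c2 (fun i => zbr i ^ 2) (fun i => sq_nonneg _) (θ / 2) (by linarith)
        (by linarith)).trans (le_of_eq ?_)
      refine Finset.sum_congr rfl fun i _ => ?_
      rw [← Real.rpow_natCast_mul (hz0 i).le]
      congr 2
      push_cast; ring
    have h7 : (7 : ℝ) ^ (θ / 2) ≤ 3 := by
      calc (7 : ℝ) ^ (θ / 2) ≤ 9 ^ (θ / 2) :=
            Real.rpow_le_rpow (by norm_num) (by norm_num) (by linarith)
        _ ≤ 9 ^ ((1 : ℝ) / 2) := Real.rpow_le_rpow_of_exponent_le (by norm_num) (by linarith)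
        _ = 3 := by
            rw [← Real.sqrt_eq_rpow, show (9 : ℝ) = 3 ^ 2 by norm_num]
            exact Real.sqrt_sq (by norm_num)
    have hp3 : zbr p ^ (θ / 2) ≤ 3 * S := by
      calc zbr p ^ (θ / 2) ≤ (7 * T) ^ (θ / 2) :=
            Real.rpow_le_rpow (hz0 p).le hzp (by linarith)
        _ = 7 ^ (θ / 2) * T ^ (θ / 2) := Real.mul_rpow (by norm_num) (by linarith)
        _ ≤ 3 * S := mul_le_mul h7 hTS (Real.rpow_nonneg (by linarith) _) (by norm_num)
    have hq3 : zbr q ^ (θ / 2) ≤ 3 * S :=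
      (Real.rpow_le_rpow (hz0 q).le hzqp (by linarith)).trans hp3
    have : (∑ i ∈ K, |(d i : ℝ)| * zbr i ^ (θ / 2)) ≤ ∑ i ∈ K, (c i : ℝ) * zbr i ^ (θ / 2) := by
      refine Finset.sum_le_sum fun i _ => mul_le_mul_of_nonneg_right ?_ (hw i)
      exact_mod_cast (hP i).1
    rw [dwc_sum_nat K c c1 p hp hc1, dwc_sum_nat K c1 c2 q hq hc2] at this
    linarith

/-- Lemma `constance 2 gen`: with `C_* = 7/(2−2^θ)`,
momentum conservation, `α ≠ β`, `|α|+|β| ≥ 3` and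
`|∑_i (α_i−β_i) i²| ≤ 2 ∑_i |α_i−β_i|`, for every `j` with `α_j+β_j ≠ 0`,
`∑_i |α_i−β_i| ⟨i⟩^{θ/2} ≤ C_* (∑_i (α_i+β_i) ⟨i⟩^θ − 2⟨j⟩^θ)`. -/
theorem divisor_weight_comparison (θ : ℝ) (hθ0 : 0 < θ) (hθ1 : θ < 1)
    (α β : Idx) (hmom : mom α β = 0) (hne : α ≠ β) (hN : 3 ≤ wt α + wt β)
    (h : |∑ᶠ i : ℤ, ((α i : ℤ) - (β i : ℤ)) * i ^ 2| ≤
      2 * ∑ᶠ i : ℤ, |(α i : ℤ) - (β i : ℤ)|)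
    (j : ℤ) (hj : α j + β j ≠ 0) :
    (∑ᶠ i : ℤ, |(α i : ℝ) - (β i : ℝ)| * zbr i ^ (θ / 2)) ≤
      (7 / (2 - (2 : ℝ) ^ θ)) *
        ((∑ᶠ i : ℤ, ((α i + β i : ℕ) : ℝ) * zbr i ^ θ) - 2 * zbr j ^ θ) := by
  classical
  have hout : ∀ i, i ∉ α.support ∪ β.support → α i = 0 ∧ β i = 0 := by
    intro i hi
    simpa [Finset.mem_union, not_or] using hi
  have hfin : ∀ {R : Type} [AddCommMonoid R] (f : ℤ → R),
      (∀ i, α i = 0 → β i = 0 → f i = 0) → ∑ᶠ i, f i = ∑ i ∈ α.support ∪ β.support, f i := by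
    intro R _ f hf
    apply finsum_eq_sum_of_support_subset
    intro i hi
    by_contra hcon
    obtain ⟨h1, h2⟩ := hout i (by simpa using hcon)
    exact hi (hf i h1 h2)
  rw [hfin _ (by intro i h1 h2; simp [h1, h2]), hfin _ (by intro i h1 h2; simp [h1, h2])] at h
  rw [hfin _ (by intro i h1 h2; simp [h1, h2]), hfin _ (by intro i h1 h2; simp [h1, h2])]
  have hw : wt α + wt β = ∑ i ∈ α.support ∪ β.support, (α i + β i) := by
    unfold wt
    rw [Finsupp.sum_of_support_subset α Finset.subset_union_left _ (by simp),
      Finsupp.sum_of_support_subset β Finset.subset_union_right _ (by simp),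
      Finset.sum_add_distrib]
  have hm : mom α β = ∑ i ∈ α.support ∪ β.support, ((α i : ℤ) - (β i : ℤ)) * i := by
    unfold mom
    rw [Finsupp.sum_of_support_subset α Finset.subset_union_left _ (by simp),
      Finsupp.sum_of_support_subset β Finset.subset_union_right _ (by simp),
      ← Finset.sum_sub_distrib]
    exact Finset.sum_congr rfl fun i _ => by ring
  have := dwc_core θ hθ0 hθ1 (α.support ∪ β.support) (fun i => α i + β i)
    (fun i => (α i : ℤ) - (β i : ℤ))
    (by
      intro i
      refine ⟨?_, ⟨(β i : ℤ), by push_cast; ring⟩⟩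
      rw [abs_le]; push_cast; omega)
    (by rw [← hm, hmom]) (by rw [← hw]; exact hN) h j
    (by by_contra hcon; have := hout j hcon; omega) hj
  simpa using this
end
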